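/- For every i ∈ {1, …, |N(σ)|} and every ψ ∈ N(σ) with Pr[ψ ↝ i] > 0: E[λ_i | ψ ↝ i] ≤ (α·E[μ* | ψ ↝ i] / (Q − f(ρ_i)))·ε_i. -/

import Mathlib

/-!
Common framework for the Stochastic Submodular Cover problem
(Hellerstein–Kletenik–Parthasarathy, "A Tight Bound for Stochastic Submodular Cover").
-/

namespace SSC

open Finset
open scoped Classical

noncomputable section

variable {E O : Type*}

/-- A subrealization assigns to each item either a state or `none` (unassigned).
A realization corresponds to the case where every item is assigned. -/
abbrev Sub (E O : Type*) := E → Option O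

/-- `subext ψ ψ'` means `ψ ⊆ ψ'` as partial assignments of states to items. -/
def subext (ψ ψ' : Sub E O) : Prop := ∀ e o, ψ e = some o → ψ' e = some o

/-- `ssubext ψ ψ'` means `ψ ⊂ ψ'` (strict extension). -/
def ssubext (ψ ψ' : Sub E O) : Prop := subext ψ ψ' ∧ ψ ≠ ψ'

/-- Extend a subrealization `ψ` by assigning state `o` to item `e`. -/
def updateSub [DecidableEq E] (ψ : Sub E O) (e : E) (o : O) : Sub E O :=
  fun e' => if e' = e then some o else ψ e'

/-- View a (full) realization as a subrealization. -/
def toSub (φ : E → O) : Sub E O := fun e => some (φ e)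

variable [Fintype E] [DecidableEq E] [Fintype O] [DecidableEq O]

/-- An instance of the Stochastic Submodular Cover problem: positive item costs `c`,
a probability mass function `p` on realizations with mutually independent item states,
and a utility function `f` on subrealizations which is zero on the empty subrealization,
nonnegative, monotone and submodular (pointwise polymatroid), and equal to the goal
value `Q > 0` on every full realization (coverability). -/
structure Problem (E O : Type*) [Fintype E] [DecidableEq E] [Fintype O] [DecidableEq O] where
  c : E → ℝ
  c_pos : ∀ e, 0 < c e
  p : (E → O) → ℝ
  p_nonneg : ∀ φ, 0 ≤ p φ
  p_sum : ∑ φ : E → O, p φ = 1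
  indep : ∀ φ : E → O, p φ = ∏ e : E, ∑ φ' : E → O, if φ' e = φ e then p φ' else 0
  f : Sub E O → ℝ
  f_nonneg : ∀ ψ, 0 ≤ f ψ
  f_empty : f (fun _ => none) = 0
  f_mono : ∀ ψ ψ' : Sub E O, subext ψ ψ' → f ψ ≤ f ψ'
  f_submod : ∀ (ψ ψ' : Sub E O) (e : E) (o : O), subext ψ ψ' → ψ' e = none →
      f (updateSub ψ' e o) - f ψ' ≤ f (updateSub ψ e o) - f ψ
  Q : ℝ
  Q_pos : 0 < Q
  f_cover : ∀ φ : E → O, f (toSub φ) = Q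

variable (M : Problem E O)

/-- Expectation of a random variable `X` with respect to the random realization `Φ`. -/
def Ex (X : (E → O) → ℝ) : ℝ := ∑ φ : E → O, M.p φ * X φ

/-- Probability of an event `A` of the random realization `Φ`. -/
def Pr (A : (E → O) → Prop) : ℝ := ∑ φ : E → O, if A φ then M.p φ else 0

/-- Conditional expectation `E[X | A]`. -/
def cEx (X : (E → O) → ℝ) (A : (E → O) → Prop) : ℝ :=
  (∑ φ : E → O, if A φ then M.p φ * X φ else 0) / Pr M A

/-- The random marginal increase in utility `F_ψ(e)` from observing the state of `e`. -/
def Fm (ψ : Sub E O) (e : E) (φ : E → O) : ℝ := M.f (updateSub ψ e (φ e)) - M.f ψ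

/-- The unit price `υ(e|ψ) = c(e) / E[F_ψ(e)]`. -/
def price (ψ : Sub E O) (e : E) : ℝ := M.c e / Ex M (Fm M ψ e)

/-- An adaptive covering policy: at every subrealization `ψ` with `f ψ < Q` it selects an
item outside `dom ψ`. -/
def IsPolicy (π : Sub E O → E) : Prop := ∀ ψ : Sub E O, M.f ψ < M.Q → ψ (π ψ) = none

/-- The `α`-approximate adaptive greedy policy: at every `ψ` with `f ψ < Q` the unit price of
the selected item `σ ψ` is at most `α` times the minimum unit price, i.e.
`υ(σ ψ | ψ) ≤ α · υ(e | ψ)` for every `e ∉ dom ψ`, written multiplicatively so that infinite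
unit prices (zero expected marginal utility) are handled correctly. -/
def IsGreedy (α : ℝ) (σ : Sub E O → E) : Prop :=
  IsPolicy M σ ∧
    ∀ ψ : Sub E O, M.f ψ < M.Q → ∀ e : E, ψ e = none →
      M.c (σ ψ) * Ex M (Fm M ψ e) ≤ α * M.c e * Ex M (Fm M ψ (σ ψ))

/-- One step of executing policy `π` on realization `φ`. -/
def stepPol (π : Sub E O → E) (φ : E → O) (ψ : Sub E O) : Sub E O :=
  if M.f ψ < M.Q then updateSub ψ (π ψ) (φ (π ψ)) else ψ

/-- The subrealization reached after `n` steps of executing `π` on `φ`. -/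
def execAux (π : Sub E O → E) (φ : E → O) : ℕ → Sub E O
  | 0 => fun _ => none
  | n + 1 => stepPol M π φ (execAux π φ n)

/-- The cover `Ψ(π)` constructed by executing `π` on realization `φ`. -/
def cover (π : Sub E O → E) (φ : E → O) : Sub E O := execAux M π φ (Fintype.card E)

/-- `ψ` is visited when executing `π` on realization `φ`. -/
def visits (π : Sub E O → E) (φ : E → O) (ψ : Sub E O) : Prop := ∃ n, execAux M π φ n = ψ

/-- The set `S(π)` of items selected when executing `π` on `φ`. -/
def Ssel (π : Sub E O → E) (φ : E → O) : Finset E :=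
  Finset.univ.filter fun e => cover M π φ e ≠ none

/-- The cost `C(π)` incurred when executing `π` on `φ`. -/
def C (π : Sub E O → E) (φ : E → O) : ℝ := ∑ e ∈ Ssel M π φ, M.c e

/-- An adaptive covering policy of minimum expected cost. -/
def IsOptimal (π : Sub E O → E) : Prop :=
  IsPolicy M π ∧ ∀ π' : Sub E O → E, IsPolicy M π' → Ex M (C M π) ≤ Ex M (C M π')

/-- `N(π)`: the non-leaf nodes of the decision tree of `π` — subrealizations with
`f ψ < Q` that are visited with positive probability. -/
def Nnodes (π : Sub E O → E) : Finset (Sub E O) :=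
  Finset.univ.filter fun ψ => M.f ψ < M.Q ∧ 0 < Pr M fun φ => visits M π φ ψ

/-- The event `ψ ↝ i`, for a marker located at utility value `b = f(ρ_i)`:
`ψ` is the last subrealization visited by `σ` (on the given realization) whose
utility is at most `b`. -/
def leadsTo (σ : Sub E O → E) (b : ℝ) (ψ : Sub E O) (φ : E → O) : Prop :=
  visits M σ φ ψ ∧ M.f ψ ≤ b ∧
    ∀ ψ' : Sub E O, visits M σ φ ψ' → M.f ψ' ≤ b → subext ψ' ψ

/-- The revenue `λ_i = υ_ψ · ε_i` collected by `σ` from the marker located at utility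
value `b = f(ρ_i)` with interval length `εi`, where `ψ` is the unique subrealization
with `ψ ↝ i`. -/
def lam (σ : Sub E O → E) (b εi : ℝ) (φ : E → O) : ℝ :=
  ∑ ψ : Sub E O, if leadsTo M σ b ψ φ then price M ψ (σ ψ) * εi else 0

/-- The revenue `μ(e)` collected by the optimal policy `πs` from item `e`
(relative to the greedy policy `σ`, both executed on the same realization). -/
def mu (σ πs : Sub E O → E) (e : E) (φ : E → O) : ℝ :=
  if e ∈ Ssel M πs φ then
    if e ∈ Ssel M σ φ then
      ∑ ψ : Sub E O,
        if visits M σ φ ψ ∧ M.f ψ < M.Q ∧ σ ψ = e then price M ψ e * Fm M ψ e φ else 0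
    else M.c e
  else 0

/-- The total revenue `μ*` collected by the optimal policy. -/
def muStar (σ πs : Sub E O → E) (φ : E → O) : ℝ := ∑ e : E, mu M σ πs e φ

/-- Replay of the internal state of policy `πs` in the second stage of the hybrid policy:
starting from the empty subrealization, repeatedly query `πs`; an item whose state is
already recorded in `ψ'` is not re-selected, its recorded state being used instead. -/
def replayAux (πs : Sub E O → E) (ψ' : Sub E O) : ℕ → Sub E O
  | 0 => fun _ => none
  | n + 1 =>
    if M.f (replayAux πs ψ' n) < M.Q then
      match ψ' (πs (replayAux πs ψ' n)) with
      | some o => updateSub (replayAux πs ψ' n) (πs (replayAux πs ψ' n)) o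
      | none => replayAux πs ψ' n
    else replayAux πs ψ' n

/-- The hybrid policy `π^ψ0`: follow `σ` until `ψ0` is visited, then switch to executing
`πs` from the root of its tree, never re-selecting an item of `dom ψ0` and using the
state recorded in `ψ0` instead. -/
def hybrid (σ πs : Sub E O → E) (ψ0 : Sub E O) : Sub E O → E := fun ψ' =>
  if subext ψ0 ψ' then πs (replayAux M πs ψ' (Fintype.card E)) else σ ψ'

/-- `δ⁺_ψ0(e)`: the marginal utility obtained by the hybrid policy `π^ψ0` when it selects
`e` during its second stage, and `0` if `e` is not selected in the second stage. -/
def deltaPlus (σ πs : Sub E O → E) (ψ0 : Sub E O) (e : E) (φ : E → O) : ℝ :=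
  ∑ ψ' : Sub E O,
    if subext ψ0 ψ' ∧ visits M (hybrid M σ πs ψ0) φ ψ' ∧
        ssubext ψ' (cover M (hybrid M σ πs ψ0) φ) ∧ hybrid M σ πs ψ0 ψ' = e
    then Fm M ψ' e φ else 0

/-!
Fix a level `b < Q` and condition on the event `A` that `ψ` is the last node of `σ` with utility
at most `b`. Submodularity bounds the missing utility `Q - f ψ` by the sum of the gains `F_ψ(e)`
over the items `e ∉ dom ψ` selected by the covering policy `π`, so the price `υ_ψ`, multiplied by
`Q - f ψ ≥ Q - b`, is at most the total that `π` would collect if every such gain were sold at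
`υ_ψ`. Item by item, this is compared with `α · E[μ(e) | A]`. If `e` is the item `σ` selects at
`ψ`, the two revenues agree on `A`. For any other `e ∉ dom ψ`, neither `A` nor `e ∈ S(π)` depends
on the state of `e`, because a policy decides to select `e` before seeing that state. Independence
therefore replaces `F_ψ(e)` by its mean, which greediness prices at `α · c(e)` at most, and the
same independence at the node where `σ` selects `e` shows that `μ(e)` recovers the cost `c(e)`
exactly in expectation.
-/

section Subrealizations

variable {E O : Type*} {ψ ψ' ψ'' : Sub E O} {e : E}

theorem subext.refl (ψ : Sub E O) : subext ψ ψ := fun _ _ h ↦ h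

theorem subext.trans (h : subext ψ ψ') (h' : subext ψ' ψ'') : subext ψ ψ'' :=
  fun e o he ↦ h' e o (h e o he)

theorem subext.antisymm (h : subext ψ ψ') (h' : subext ψ' ψ) : ψ = ψ' :=
  funext fun e ↦ Option.ext fun o ↦ ⟨h e o, h' e o⟩

theorem subext.eq_none (h : subext ψ ψ') (he : ψ' e = none) : ψ e = none :=
  Option.eq_none_iff_forall_ne_some.mpr fun o ho ↦ by simp [h e o ho] at he

theorem dom_subset_compl_singleton (h : ψ e = none) : {i | ψ i ≠ none} ⊆ {e}ᶜ :=
  Set.subset_compl_singleton_iff.mpr fun he ↦ he h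

variable [DecidableEq E]

theorem updateSub_self (ψ : Sub E O) (e : E) (o : O) : updateSub ψ e o e = some o :=
  if_pos rfl

theorem updateSub_of_ne {e' : E} (h : e' ≠ e) (ψ : Sub E O) (o : O) :
    updateSub ψ e o e' = ψ e' :=
  if_neg h

theorem updateSub_eq_update (ψ : Sub E O) (e : E) (o : O) :
    updateSub ψ e o = Function.update ψ e (some o) := by
  funext e'
  rw [updateSub, Function.update_apply]

theorem subext_updateSub (h : ψ e = none) (o : O) : subext ψ (updateSub ψ e o) := by
  intro e' o' he'
  rwa [updateSub_of_ne (by rintro rfl; simp [h] at he')]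

theorem updateSub_subext_toSub {φ : E → O} (h : subext ψ (toSub φ)) (e : E) :
    subext (updateSub ψ e (φ e)) (toSub φ) := by
  intro e' o he'
  obtain rfl | hne := eq_or_ne e' e
  · rwa [updateSub_self] at he'
  · exact h e' o (by rwa [updateSub_of_ne hne] at he')

end Subrealizations

section Expectation

variable {X Y : (E → O) → ℝ} {A : (E → O) → Prop}

/-- The probability `Pr[Φ(e) = o]` that item `e` is in state `o`. -/
def stateProb (e : E) (o : O) : ℝ := Pr M fun φ ↦ φ e = o

theorem p_eq_prod_stateProb (φ : E → O) : M.p φ = ∏ e, stateProb M e (φ e) := by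
  simp only [stateProb, Pr]
  convert M.indep φ

theorem sum_stateProb_mul (e : E) (h : O → ℝ) :
    ∑ o, stateProb M e o * h o = Ex M fun φ ↦ h (φ e) := by
  simp only [stateProb, Pr, Ex, Finset.sum_mul]
  rw [Finset.sum_comm]
  simp only [ite_mul, zero_mul, Finset.sum_ite_eq, Finset.mem_univ, if_true]

theorem sum_stateProb (e : E) : ∑ o, stateProb M e o = 1 := by
  simpa [Ex, M.p_sum] using sum_stateProb_mul M e fun _ ↦ 1

theorem p_update_mul_stateProb (φ : E → O) (e : E) (o : O) :
    M.p (Function.update φ e o) * stateProb M e (φ e) = M.p φ * stateProb M e o := by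
  have hrest : ∏ x ∈ univ.erase e, stateProb M x (Function.update φ e o x)
      = ∏ x ∈ univ.erase e, stateProb M x (φ x) :=
    Finset.prod_congr rfl fun x hx ↦ by rw [Function.update_of_ne (Finset.ne_of_mem_erase hx)]
  simp only [p_eq_prod_stateProb, ← Finset.mul_prod_erase univ _ (Finset.mem_univ e), hrest,
    Function.update_self]
  ring

/-- The pair of `Φ` and a fresh independent copy of `Φ(e)` has the same law after swapping `Φ(e)`
with the copy; `X` does not notice the swap, which hands the copy to `h`. -/
theorem Ex_mul_of_dependsOn {e : E} (hX : DependsOn X {e}ᶜ) (h : O → ℝ) :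
    Ex M (fun φ ↦ X φ * h (φ e)) = Ex M X * Ex M fun φ ↦ h (φ e) := by
  have hswap : Function.Involutive
      fun x : (E → O) × O ↦ (Function.update x.1 e x.2, x.1 e) := fun _ ↦ by simp
  calc Ex M (fun φ ↦ X φ * h (φ e))
      = ∑ x : (E → O) × O, M.p x.1 * stateProb M e x.2 * (X x.1 * h (x.1 e)) := by
        simp only [Fintype.sum_prod_type, ← Finset.sum_mul, ← Finset.mul_sum, sum_stateProb,
          mul_one, Ex]
    _ = ∑ x : (E → O) × O, M.p x.1 * X x.1 * (stateProb M e x.2 * h x.2) := by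
        rw [← Equiv.sum_comp hswap.toPerm fun x ↦ M.p x.1 * X x.1 * (stateProb M e x.2 * h x.2)]
        refine Finset.sum_congr rfl fun x _ ↦ ?_
        have hXx : X (Function.update x.1 e x.2) = X x.1 :=
          hX fun i hi ↦ Function.update_of_ne hi _ _
        simp only [Function.Involutive.coe_toPerm, hXx]
        linear_combination (-(X x.1 * h (x.1 e))) * p_update_mul_stateProb M x.1 e x.2
    _ = Ex M X * Ex M fun φ ↦ h (φ e) := by
        rw [← sum_stateProb_mul, Ex, Finset.sum_mul_sum, Fintype.sum_prod_type]

theorem exists_of_Pr_pos (hA : 0 < Pr M A) : ∃ φ, A φ := by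
  by_contra! h
  simp [Pr, h] at hA

theorem Pr_nonneg (A : (E → O) → Prop) : 0 ≤ Pr M A :=
  Finset.sum_nonneg fun φ _ ↦ by split_ifs <;> simp [M.p_nonneg]

theorem cEx_eq_Ex_div (X : (E → O) → ℝ) (A : (E → O) → Prop) :
    cEx M X A = Ex M (fun φ ↦ if A φ then X φ else 0) / Pr M A := by
  simp only [cEx, Ex, mul_ite, mul_zero]

theorem Ex_eq_cEx_true (X : (E → O) → ℝ) : Ex M X = cEx M X fun _ ↦ True := by
  simp [cEx, Ex, Pr, M.p_sum]

theorem cEx_congr (h : ∀ φ, A φ → X φ = Y φ) : cEx M X A = cEx M Y A := by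
  simp +contextual only [cEx, h]

theorem cEx_mono (h : ∀ φ, A φ → X φ ≤ Y φ) : cEx M X A ≤ cEx M Y A := by
  refine div_le_div_of_nonneg_right (Finset.sum_le_sum fun φ _ ↦ ?_) (Pr_nonneg M A)
  split_ifs with hφ
  · exact mul_le_mul_of_nonneg_left (h φ hφ) (M.p_nonneg φ)
  · exact le_rfl

theorem cEx_const (hA : 0 < Pr M A) (r : ℝ) : cEx M (fun _ ↦ r) A = r := by
  rw [cEx, div_eq_iff hA.ne', Pr, Finset.mul_sum]
  exact Finset.sum_congr rfl fun φ _ ↦ by split_ifs <;> ring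

theorem cEx_const_mul (r : ℝ) (X : (E → O) → ℝ) (A : (E → O) → Prop) :
    cEx M (fun φ ↦ r * X φ) A = r * cEx M X A := by
  simp only [cEx, ← mul_div_assoc, Finset.mul_sum, mul_ite, mul_zero, mul_left_comm]

theorem cEx_add (X Y : (E → O) → ℝ) (A : (E → O) → Prop) :
    cEx M (fun φ ↦ X φ + Y φ) A = cEx M X A + cEx M Y A := by
  simp only [cEx, ← add_div, ← Finset.sum_add_distrib, mul_add, ite_add_ite, add_zero]

theorem cEx_sum {ι : Type*} (s : Finset ι) (X : ι → (E → O) → ℝ) (A : (E → O) → Prop) :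
    cEx M (fun φ ↦ ∑ i ∈ s, X i φ) A = ∑ i ∈ s, cEx M (X i) A := by
  simp only [cEx, ← Finset.sum_div, Finset.mul_sum]
  rw [Finset.sum_comm]
  simp only [Finset.sum_ite_irrel, Finset.sum_const_zero]

theorem cEx_nonneg (h : ∀ φ, 0 ≤ X φ) : 0 ≤ cEx M X A :=
  div_nonneg (Finset.sum_nonneg fun φ _ ↦ by
    split_ifs
    exacts [mul_nonneg (M.p_nonneg φ) (h φ), le_rfl]) (Pr_nonneg M A)

theorem cEx_mul_of_dependsOn {e : E} (hA : DependsOn A {e}ᶜ) (hX : DependsOn X {e}ᶜ) (h : O → ℝ) :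
    cEx M (fun φ ↦ X φ * h (φ e)) A = cEx M X A * Ex M fun φ ↦ h (φ e) := by
  have hAX : DependsOn (fun φ ↦ if A φ then X φ else 0) {e}ᶜ :=
    fun φ φ' hφ ↦ by simp only [hA hφ, hX hφ]
  rw [cEx_eq_Ex_div, cEx_eq_Ex_div, div_mul_eq_mul_div, ← Ex_mul_of_dependsOn M hAX]
  simp only [ite_mul, zero_mul]

end Expectation

section Utility

variable {ψ : Sub E O} {e : E}

theorem Fm_nonneg (h : ψ e = none) (φ : E → O) : 0 ≤ Fm M ψ e φ :=
  sub_nonneg.mpr (M.f_mono _ _ (subext_updateSub h (φ e)))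

theorem Ex_Fm_nonneg (h : ψ e = none) : 0 ≤ Ex M (Fm M ψ e) :=
  Finset.sum_nonneg fun φ _ ↦ mul_nonneg (M.p_nonneg φ) (Fm_nonneg M h φ)

theorem price_nonneg (h : ψ e = none) : 0 ≤ price M ψ e :=
  div_nonneg (M.c_pos e).le (Ex_Fm_nonneg M h)

theorem Ex_price_mul_Fm_sub_cost (h : 0 < Ex M (Fm M ψ e)) :
    Ex M (fun φ ↦ price M ψ e * Fm M ψ e φ - M.c e) = 0 := by
  calc Ex M (fun φ ↦ price M ψ e * Fm M ψ e φ - M.c e)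
      = price M ψ e * Ex M (Fm M ψ e) - M.c e := by
        simp only [Ex, mul_sub, Finset.sum_sub_distrib, ← Finset.sum_mul, M.p_sum, one_mul,
          mul_left_comm (M.p _), ← Finset.mul_sum]
    _ = 0 := by rw [price, div_mul_cancel₀ _ h.ne', sub_self]

theorem f_piecewise_sub_le_sum_Fm {S : Finset E} (hS : ∀ e ∈ S, ψ e = none) (φ : E → O) :
    M.f (S.piecewise (toSub φ) ψ) - M.f ψ ≤ ∑ e ∈ S, Fm M ψ e φ := by
  induction S using Finset.induction_on with
  | empty => simp
  | insert a S ha ih =>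
    have hψS : subext ψ (S.piecewise (toSub φ) ψ) := by
      intro e o he
      rwa [Finset.piecewise_eq_of_notMem _ _ _
        fun heS ↦ by simp [hS e (Finset.mem_insert_of_mem heS)] at he]
    have hagain := M.f_submod ψ _ a (φ a) hψS <| by
      rw [Finset.piecewise_eq_of_notMem _ _ _ ha, hS a (Finset.mem_insert_self a S)]
    have ih := ih fun e he ↦ hS e (Finset.mem_insert_of_mem he)
    rw [updateSub_eq_update] at hagain
    rw [Finset.sum_insert ha, Finset.piecewise_insert, Fm]
    change M.f (Function.update _ a (some (φ a))) - _ ≤ _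
    linarith

theorem Q_sub_f_le_sum_Fm (ψ : Sub E O) (φ : E → O) :
    M.Q - M.f ψ ≤ ∑ e with ψ e = none, Fm M ψ e φ := by
  have hfull : ({e | ψ e = none} : Finset E).piecewise (toSub φ) ψ
      = toSub fun e ↦ (ψ e).getD (φ e) := by
    funext e
    cases he : ψ e <;> simp [Finset.piecewise, toSub, he]
  simpa only [hfull, M.f_cover] using
    f_piecewise_sub_le_sum_Fm M (ψ := ψ) (S := {e | ψ e = none}) (by simp) φ

theorem exists_Ex_Fm_pos (hψ : M.f ψ < M.Q) : ∃ e, ψ e = none ∧ 0 < Ex M (Fm M ψ e) := by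
  by_contra! h
  have htrue : 0 < Pr M fun _ ↦ True := by simp [Pr, M.p_sum]
  have hgap : M.Q - M.f ψ ≤ ∑ e with ψ e = none, Ex M (Fm M ψ e) := by
    simp only [Ex_eq_cEx_true, ← cEx_sum]
    exact (cEx_const M htrue _).symm.trans_le (cEx_mono M fun φ _ ↦ Q_sub_f_le_sum_Fm M ψ φ)
  have hsum : ∑ e with ψ e = none, Ex M (Fm M ψ e) ≤ 0 :=
    Finset.sum_nonpos fun e he ↦ h e (Finset.mem_filter.mp he).2
  linarith

end Utility

section Greedy

variable {M} {α : ℝ} {σ : Sub E O → E} {ψ : Sub E O}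

theorem IsGreedy.isPolicy (hσ : IsGreedy M α σ) : IsPolicy M σ := hσ.1

theorem IsGreedy.Ex_Fm_pos (hσ : IsGreedy M α σ) (hψ : M.f ψ < M.Q) :
    0 < Ex M (Fm M ψ (σ ψ)) := by
  obtain ⟨e, he, hpos⟩ := exists_Ex_Fm_pos M hψ
  refine (Ex_Fm_nonneg M (hσ.isPolicy ψ hψ)).lt_of_ne' fun hzero ↦ ?_
  have hle := hσ.2 ψ hψ e he
  rw [hzero, mul_zero] at hle
  exact hle.not_gt (mul_pos (M.c_pos _) hpos)

theorem IsGreedy.price_mul_Ex_Fm_le (hσ : IsGreedy M α σ) (hψ : M.f ψ < M.Q) {e : E}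
    (he : ψ e = none) : price M ψ (σ ψ) * Ex M (Fm M ψ e) ≤ α * M.c e := by
  rw [price, div_mul_eq_mul_div, div_le_iff₀ (hσ.Ex_Fm_pos hψ)]
  exact hσ.2 ψ hψ e he

theorem IsGreedy.one_le (hσ : IsGreedy M α σ) (hψ : M.f ψ < M.Q) : 1 ≤ α := by
  have hle := hσ.price_mul_Ex_Fm_le hψ (hσ.isPolicy ψ hψ)
  rw [price, div_mul_cancel₀ _ (hσ.Ex_Fm_pos hψ).ne'] at hle
  exact (le_mul_iff_one_le_left (M.c_pos _)).mp hle

end Greedy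

section Execution

variable {M} {π : Sub E O → E} {φ φ' : E → O} {ψ ψ' : Sub E O} {e : E} {n : ℕ}

theorem execAux_succ_of_lt (h : M.f (execAux M π φ n) < M.Q) :
    execAux M π φ (n + 1)
      = updateSub (execAux M π φ n) (π (execAux M π φ n)) (φ (π (execAux M π φ n))) :=
  if_pos h

theorem execAux_succ_of_le (h : M.Q ≤ M.f (execAux M π φ n)) :
    execAux M π φ (n + 1) = execAux M π φ n :=
  if_neg h.not_gt

theorem execAux_subext_toSub (M : Problem E O) (π : Sub E O → E) (φ : E → O) (n : ℕ) :
    subext (execAux M π φ n) (toSub φ) := by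
  induction n with
  | zero => exact fun _ _ h ↦ nomatch h
  | succ n ih =>
    rcases lt_or_ge (M.f (execAux M π φ n)) M.Q with h | h
    · exact execAux_succ_of_lt h ▸ updateSub_subext_toSub ih _
    · exact execAux_succ_of_le h ▸ ih

theorem execAux_congr (h : ∀ e, execAux M π φ n e ≠ none → φ e = φ' e) :
    execAux M π φ' n = execAux M π φ n := by
  induction n with
  | zero => rfl
  | succ n ih =>
    rcases lt_or_ge (M.f (execAux M π φ n)) M.Q with hlt | hle
    · rw [execAux_succ_of_lt hlt] at h ⊢
      have ih := ih fun e he ↦ h e <| by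
        unfold updateSub
        split_ifs
        exacts [Option.some_ne_none _, he]
      rw [execAux_succ_of_lt (ih ▸ hlt), ih, h _ (by simp [updateSub_self])]
    · rw [execAux_succ_of_le hle] at h ⊢
      rw [execAux_succ_of_le (ih h ▸ hle), ih h]

theorem IsPolicy.execAux_subext_succ (hπ : IsPolicy M π) (φ : E → O) (n : ℕ) :
    subext (execAux M π φ n) (execAux M π φ (n + 1)) := by
  rcases lt_or_ge (M.f (execAux M π φ n)) M.Q with h | h
  · exact execAux_succ_of_lt h ▸ subext_updateSub (hπ _ h) _
  · exact execAux_succ_of_le h ▸ subext.refl _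

theorem IsPolicy.execAux_mono (hπ : IsPolicy M π) (φ : E → O) {m n : ℕ} (h : m ≤ n) :
    subext (execAux M π φ m) (execAux M π φ n) := by
  induction n, h using Nat.le_induction with
  | base => exact subext.refl _
  | succ n _ ih => exact ih.trans (hπ.execAux_subext_succ φ n)

theorem IsPolicy.card_dom_execAux (hπ : IsPolicy M π) (h : M.f (execAux M π φ n) < M.Q) :
    #{e | execAux M π φ n e ≠ none} = n := by
  induction n with
  | zero => simp [execAux]
  | succ n ih =>
    have hlt : M.f (execAux M π φ n) < M.Q :=
      (M.f_mono _ _ (hπ.execAux_subext_succ φ n)).trans_lt h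
    have hdom : ({e | execAux M π φ (n + 1) e ≠ none} : Finset E)
        = insert (π (execAux M π φ n)) ({e | execAux M π φ n e ≠ none} : Finset E) := by
      ext e
      by_cases he : e = π (execAux M π φ n) <;> simp [execAux_succ_of_lt hlt, updateSub, he]
    rw [hdom, Finset.card_insert_of_notMem (by simp [hπ _ hlt]), ih hlt]

theorem IsPolicy.Q_le_f_cover (hπ : IsPolicy M π) (φ : E → O) : M.Q ≤ M.f (cover M π φ) := by
  by_contra! h
  have hdom : ({e | cover M π φ e ≠ none} : Finset E) = univ :=
    Finset.eq_univ_of_card _ (hπ.card_dom_execAux h)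
  have hfull : subext (toSub φ) (cover M π φ) := by
    intro e o he
    obtain ⟨o', ho'⟩ := Option.ne_none_iff_exists'.mp
      (Finset.mem_filter.mp (hdom.ge (Finset.mem_univ e))).2
    rwa [ho', ← execAux_subext_toSub M π φ _ e o' ho']
  exact h.not_ge (M.f_cover φ ▸ M.f_mono _ _ hfull)

theorem IsPolicy.execAux_subext_cover (hπ : IsPolicy M π) (φ : E → O) (n : ℕ) :
    subext (execAux M π φ n) (cover M π φ) := by
  rcases le_total n (Fintype.card E) with h | h
  · exact hπ.execAux_mono φ h
  · suffices execAux M π φ n = cover M π φ from this ▸ subext.refl _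
    induction n, h using Nat.le_induction with
    | base => rfl
    | succ n _ ih => rw [execAux_succ_of_le (ih ▸ hπ.Q_le_f_cover φ), ih]

theorem visits.subext_toSub (h : visits M π φ ψ) : subext ψ (toSub φ) := by
  obtain ⟨n, rfl⟩ := h
  exact execAux_subext_toSub M π φ n

theorem visits.updateSub (h : visits M π φ ψ) (hψ : M.f ψ < M.Q) :
    visits M π φ (updateSub ψ (π ψ) (φ (π ψ))) := by
  obtain ⟨n, rfl⟩ := h
  exact ⟨n + 1, execAux_succ_of_lt hψ⟩

theorem IsPolicy.subext_or_updateSub_subext (hπ : IsPolicy M π) (h : visits M π φ ψ)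
    (hψ : M.f ψ < M.Q) (h' : visits M π φ ψ') :
    subext ψ' ψ ∨ subext (updateSub ψ (π ψ) (φ (π ψ))) ψ' := by
  obtain ⟨n, rfl⟩ := h
  obtain ⟨m, rfl⟩ := h'
  rcases le_or_gt m n with hmn | hnm
  · exact .inl (hπ.execAux_mono φ hmn)
  · exact .inr (execAux_succ_of_lt hψ ▸ hπ.execAux_mono φ hnm)

theorem dependsOn_visits (M : Problem E O) (π : Sub E O → E) (ψ : Sub E O) :
    DependsOn (fun φ ↦ visits M π φ ψ) {e | ψ e ≠ none} := by
  have himp : ∀ φ φ' : E → O, (∀ e ∈ {e | ψ e ≠ none}, φ e = φ' e) →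
      visits M π φ ψ → visits M π φ' ψ := by
    rintro φ φ' hφ ⟨n, rfl⟩
    exact ⟨n, execAux_congr hφ⟩
  exact fun φ φ' hφ ↦ propext ⟨himp φ φ' hφ, himp φ' φ fun e he ↦ (hφ e he).symm⟩

theorem dependsOn_mem_Ssel (M : Problem E O) (π : Sub E O → E) (e : E) :
    DependsOn (fun φ ↦ e ∈ Ssel M π φ) {e}ᶜ := by
  have himp : ∀ φ φ' : E → O, (∀ i ∈ ({e}ᶜ : Set E), φ i = φ' i) →
      e ∉ Ssel M π φ → e ∉ Ssel M π φ' := by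
    intro φ φ' hφ he
    have hnone : cover M π φ e = none := by simpa [Ssel] using he
    have hcover : cover M π φ' = cover M π φ :=
      execAux_congr fun i hi ↦ hφ i (by rintro rfl; exact hi hnone)
    simpa [Ssel, hcover] using hnone
  exact fun φ φ' hφ ↦ propext <| not_iff_not.mp
    ⟨himp φ φ' hφ, himp φ' φ fun i hi ↦ (hφ i hi).symm⟩

theorem IsPolicy.leadsTo_iff (hπ : IsPolicy M π) (hψ : M.f ψ < M.Q) {b : ℝ} :
    leadsTo M π b ψ φ ↔
      visits M π φ ψ ∧ M.f ψ ≤ b ∧ b < M.f (updateSub ψ (π ψ) (φ (π ψ))) := by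
  refine and_congr_right fun hv ↦ and_congr_right fun _ ↦ ⟨fun hlast ↦ ?_, fun hb ψ' hv' hb' ↦ ?_⟩
  · by_contra! hle
    have hsome := hlast _ (hv.updateSub hψ) hle (π ψ) _ (updateSub_self ..)
    simp [hπ ψ hψ] at hsome
  · exact (hπ.subext_or_updateSub_subext hv hψ hv').resolve_right
      fun hsub ↦ (hb.trans_le (M.f_mono _ _ hsub)).not_ge hb'

theorem IsPolicy.dependsOn_leadsTo (hπ : IsPolicy M π) (hψ : M.f ψ < M.Q) (b : ℝ) :
    DependsOn (leadsTo M π b ψ) (insert (π ψ) {e | ψ e ≠ none}) := by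
  intro φ φ' hφ
  have hv := dependsOn_visits M π ψ fun e he ↦ hφ e (.inr he)
  simp only [eq_iff_iff] at hv ⊢
  rw [hπ.leadsTo_iff hψ, hπ.leadsTo_iff hψ, hv, hφ (π ψ) (.inl rfl)]

theorem IsPolicy.Q_sub_f_le_sum_Ssel (hπ : IsPolicy M π) (hψ : subext ψ (toSub φ)) :
    M.Q - M.f ψ ≤ ∑ e ∈ Ssel M π φ with ψ e = none, Fm M ψ e φ := by
  set S : Finset E := {e ∈ Ssel M π φ | ψ e = none} with hS
  have hcover : subext (cover M π φ) (S.piecewise (toSub φ) ψ) := by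
    intro e o he
    have heo : toSub φ e = some o := execAux_subext_toSub M π φ _ e o he
    by_cases heS : e ∈ S
    · rwa [Finset.piecewise_eq_of_mem _ _ _ heS]
    · rw [Finset.piecewise_eq_of_notMem _ _ _ heS]
      obtain ⟨o', ho'⟩ : ∃ o', ψ e = some o' := by
        simpa [hS, Ssel, he, Option.ne_none_iff_exists'] using heS
      rw [ho', ← hψ e o' ho', heo]
  linarith [hπ.Q_le_f_cover φ, M.f_mono _ _ hcover,
    f_piecewise_sub_le_sum_Fm M (fun e he ↦ (Finset.mem_filter.mp he).2) φ (S := S)]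

end Execution

section Selection

/-- `SelectsAt M π φ ψ e`: executed on `φ`, the policy `π` selects the item `e` at the node `ψ`. -/
def SelectsAt (π : Sub E O → E) (φ : E → O) (ψ : Sub E O) (e : E) : Prop :=
  visits M π φ ψ ∧ M.f ψ < M.Q ∧ π ψ = e

/-- The indicator of the event `e ∈ S(π)`, as a real random variable. -/
def selInd (π : Sub E O → E) (e : E) (φ : E → O) : ℝ := if e ∈ Ssel M π φ then 1 else 0

variable {M} {π : Sub E O → E} {φ : E → O} {ψ ψ' : Sub E O} {e : E}

theorem SelectsAt.eq_none (h : SelectsAt M π φ ψ e) (hπ : IsPolicy M π) : ψ e = none :=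
  h.2.2 ▸ hπ ψ h.2.1

theorem SelectsAt.subext (hπ : IsPolicy M π) (h : SelectsAt M π φ ψ e)
    (h' : SelectsAt M π φ ψ' e) : subext ψ' ψ := by
  refine (hπ.subext_or_updateSub_subext h.1 h.2.1 h'.1).resolve_right fun hsub ↦ ?_
  rw [h.2.2] at hsub
  simpa [updateSub_self] using hsub.eq_none (h'.eq_none hπ)

theorem SelectsAt.unique (hπ : IsPolicy M π) (h : SelectsAt M π φ ψ e)
    (h' : SelectsAt M π φ ψ' e) : ψ' = ψ :=
  (h.subext hπ h').antisymm (h'.subext hπ h)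

theorem SelectsAt.sum_eq (hπ : IsPolicy M π) (h : SelectsAt M π φ ψ e) (g : Sub E O → ℝ) :
    ∑ ψ', (if SelectsAt M π φ ψ' e then g ψ' else 0) = g ψ := by
  rw [Finset.sum_eq_single ψ (fun ψ' _ hne ↦ if_neg fun h' ↦ hne (h.unique hπ h')) (by simp),
    if_pos h]

theorem SelectsAt.mem_Ssel (hπ : IsPolicy M π) (h : SelectsAt M π φ ψ e) : e ∈ Ssel M π φ := by
  obtain ⟨hv, hψ, rfl⟩ := h
  obtain ⟨n, hn⟩ := hv.updateSub hψ
  have hcover := hπ.execAux_subext_cover φ n (π ψ) _ (hn ▸ updateSub_self ..)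
  simp [Ssel, hcover]

theorem exists_selectsAt_of_mem_Ssel (h : e ∈ Ssel M π φ) : ∃ ψ, SelectsAt M π φ ψ e := by
  have hexec : ∀ n, execAux M π φ n e ≠ none → ∃ ψ, SelectsAt M π φ ψ e := by
    intro n
    induction n with
    | zero => exact fun hne ↦ absurd rfl hne
    | succ n ih =>
      intro hne
      rcases lt_or_ge (M.f (execAux M π φ n)) M.Q with hlt | hle
      · by_cases he : e = π (execAux M π φ n)
        · exact ⟨_, ⟨n, rfl⟩, hlt, he.symm⟩
        · exact ih (by rwa [execAux_succ_of_lt hlt, updateSub_of_ne he] at hne)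
      · exact ih (execAux_succ_of_le hle ▸ hne)
  exact hexec _ (Finset.mem_filter.mp h).2

theorem dependsOn_selectsAt (M : Problem E O) (π : Sub E O → E) (ψ : Sub E O) (e : E) :
    DependsOn (fun φ ↦ SelectsAt M π φ ψ e) {e | ψ e ≠ none} :=
  fun _ _ hφ ↦ congrArg (· ∧ M.f ψ < M.Q ∧ π ψ = e) (dependsOn_visits M π ψ hφ)

theorem dependsOn_selInd (M : Problem E O) (π : Sub E O → E) (e : E) :
    DependsOn (selInd M π e) {e}ᶜ :=
  fun φ φ' hφ ↦ by simp only [selInd, dependsOn_mem_Ssel M π e hφ]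

theorem selInd_nonneg (M : Problem E O) (π : Sub E O → E) (e : E) (φ : E → O) :
    0 ≤ selInd M π e φ := by
  unfold selInd
  positivity

theorem IsPolicy.Q_sub_f_le_sum_selInd_mul_Fm (hπ : IsPolicy M π) (hψ : subext ψ (toSub φ)) :
    M.Q - M.f ψ ≤ ∑ e with ψ e = none, selInd M π e φ * Fm M ψ e φ := by
  refine (hπ.Q_sub_f_le_sum_Ssel hψ).trans_eq ?_
  simp only [selInd, ite_mul, one_mul, zero_mul, Finset.sum_ite, Finset.sum_const_zero, add_zero]
  congr 1
  ext e
  simp [and_comm]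

end Selection

section Revenue

variable {M} {α : ℝ} {σ π : Sub E O → E} {φ : E → O} {ψ : Sub E O} {e : E}

theorem SelectsAt.mu_eq (hσ : IsPolicy M σ) (h : SelectsAt M σ φ ψ e) :
    mu M σ π e φ = selInd M π e φ * (price M ψ e * Fm M ψ e φ) := by
  simp only [mu, h.mem_Ssel hσ, if_true, selInd, ite_mul, one_mul, zero_mul]
  congr 1
  convert h.sum_eq hσ fun ψ' ↦ price M ψ' e * Fm M ψ' e φ using 3
  exact Iff.rfl

theorem mu_eq_cost_of_notMem (he : e ∉ Ssel M σ φ) : mu M σ π e φ = M.c e * selInd M π e φ := by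
  simp only [mu, he, if_false, selInd, mul_ite, mul_one, mul_zero]

theorem mu_nonneg (hσ : IsPolicy M σ) (π : Sub E O → E) (e : E) (φ : E → O) :
    0 ≤ mu M σ π e φ := by
  by_cases he : e ∈ Ssel M σ φ
  · obtain ⟨ψ, hψ⟩ := exists_selectsAt_of_mem_Ssel he
    have hnone := hψ.eq_none hσ
    rw [hψ.mu_eq hσ]
    exact mul_nonneg (selInd_nonneg M π e φ)
      (mul_nonneg (price_nonneg M hnone) (Fm_nonneg M hnone φ))
  · rw [mu_eq_cost_of_notMem he]
    exact mul_nonneg (M.c_pos e).le (selInd_nonneg M π e φ)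

theorem mu_eq_cost_add_sum (hσ : IsPolicy M σ) (π : Sub E O → E) (e : E) (φ : E → O) :
    mu M σ π e φ = M.c e * selInd M π e φ
      + ∑ ψ, (if SelectsAt M σ φ ψ e then selInd M π e φ else 0)
          * (price M ψ e * Fm M ψ e φ - M.c e) := by
  simp only [ite_mul, zero_mul]
  by_cases he : e ∈ Ssel M σ φ
  · obtain ⟨ψ, hψ⟩ := exists_selectsAt_of_mem_Ssel he
    rw [hψ.mu_eq hσ, hψ.sum_eq hσ fun ψ ↦ selInd M π e φ * (price M ψ e * Fm M ψ e φ - M.c e)]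
    ring
  · have hnot : ∀ ψ, ¬ SelectsAt M σ φ ψ e := fun ψ hψ ↦ he (hψ.mem_Ssel hσ)
    simp only [mu_eq_cost_of_notMem he, hnot, if_false, Finset.sum_const_zero, add_zero]

theorem IsGreedy.cEx_mu_eq (hσ : IsGreedy M α σ) (π : Sub E O → E) {A : (E → O) → Prop}
    (hA : DependsOn A {e}ᶜ) : cEx M (mu M σ π e) A = M.c e * cEx M (selInd M π e) A := by
  rw [cEx_congr M fun φ _ ↦ mu_eq_cost_add_sum hσ.isPolicy π e φ, cEx_add, cEx_const_mul, cEx_sum]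
  refine add_eq_left.mpr (Finset.sum_eq_zero fun ψ _ ↦ ?_)
  by_cases hψ : M.f ψ < M.Q ∧ σ ψ = e
  · obtain ⟨hlt, rfl⟩ := hψ
    have hselects : DependsOn (fun φ ↦ SelectsAt M σ φ ψ (σ ψ)) {σ ψ}ᶜ :=
      (dependsOn_selectsAt M σ ψ (σ ψ)).mono (dom_subset_compl_singleton (hσ.isPolicy ψ hlt))
    have hX : DependsOn (fun φ ↦ if SelectsAt M σ φ ψ (σ ψ) then selInd M π (σ ψ) φ else 0)
        {σ ψ}ᶜ :=
      fun φ φ' hφ ↦ by simp only [hselects hφ, dependsOn_selInd M π _ hφ]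
    have hmul := cEx_mul_of_dependsOn M hA hX
      fun o ↦ price M ψ (σ ψ) * (M.f (updateSub ψ (σ ψ) o) - M.f ψ) - M.c (σ ψ)
    exact hmul.trans (mul_eq_zero_of_right _ (Ex_price_mul_Fm_sub_cost M (hσ.Ex_Fm_pos hlt)))
  · have hnot : ∀ φ, ¬ SelectsAt M σ φ ψ e := fun φ h ↦ hψ h.2
    simp only [hnot, if_false, zero_mul, cEx, mul_zero, ite_self, Finset.sum_const_zero, zero_div]

theorem cEx_lam {b : ℝ} (hpos : 0 < Pr M (leadsTo M σ b ψ)) (r : ℝ) :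
    cEx M (lam M σ b r) (leadsTo M σ b ψ) = price M ψ (σ ψ) * r := by
  refine (cEx_congr M fun φ hφ ↦ ?_).trans (cEx_const M hpos _)
  rw [lam, Finset.sum_eq_single ψ (fun ψ' _ hne ↦ if_neg fun hφ' ↦ hne ?_) (by simp), if_pos hφ]
  exact (hφ.2.2 ψ' hφ'.1 hφ'.2.1).antisymm (hφ'.2.2 ψ hφ.1 hφ.2.1)

theorem IsGreedy.price_mul_cEx_Fm_le (hσ : IsGreedy M α σ) (π : Sub E O → E) (b : ℝ)
    (hψ : M.f ψ < M.Q) (he : ψ e = none) :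
    price M ψ (σ ψ) * cEx M (fun φ ↦ selInd M π e φ * Fm M ψ e φ) (leadsTo M σ b ψ)
      ≤ α * cEx M (mu M σ π e) (leadsTo M σ b ψ) := by
  obtain rfl | hne := eq_or_ne e (σ ψ)
  · refine le_trans (le_of_eq ?_) (le_mul_of_one_le_left
      (cEx_nonneg M (mu_nonneg hσ.isPolicy π _)) (hσ.one_le hψ))
    rw [← cEx_const_mul]
    refine cEx_congr M fun φ hφ ↦ ?_
    rw [SelectsAt.mu_eq hσ.isPolicy ⟨hφ.1, hψ, rfl⟩, mul_left_comm]
  · have hA : DependsOn (leadsTo M σ b ψ) {e}ᶜ :=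
      (hσ.isPolicy.dependsOn_leadsTo hψ b).mono
        (Set.insert_subset hne.symm (dom_subset_compl_singleton he))
    have hsep : cEx M (fun φ ↦ selInd M π e φ * Fm M ψ e φ) (leadsTo M σ b ψ)
        = cEx M (selInd M π e) (leadsTo M σ b ψ) * Ex M (Fm M ψ e) :=
      cEx_mul_of_dependsOn M hA (dependsOn_selInd M π e) fun o ↦ M.f (updateSub ψ e o) - M.f ψ
    rw [hsep, hσ.cEx_mu_eq π hA, mul_left_comm, ← mul_assoc α, mul_comm (α * M.c e)]
    exact mul_le_mul_of_nonneg_left (hσ.price_mul_Ex_Fm_le hψ he)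
      (cEx_nonneg M (selInd_nonneg M π e))

theorem IsGreedy.price_mul_Q_sub_f_le (hσ : IsGreedy M α σ) (hπ : IsPolicy M π) {b : ℝ}
    (hψ : M.f ψ < M.Q) (hpos : 0 < Pr M (leadsTo M σ b ψ)) :
    price M ψ (σ ψ) * (M.Q - M.f ψ) ≤ α * cEx M (muStar M σ π) (leadsTo M σ b ψ) := by
  set A := leadsTo M σ b ψ
  have hprice : 0 ≤ price M ψ (σ ψ) := price_nonneg M (hσ.isPolicy ψ hψ)
  have hα : 0 ≤ α := zero_le_one.trans (hσ.one_le hψ)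
  calc price M ψ (σ ψ) * (M.Q - M.f ψ)
      = price M ψ (σ ψ) * cEx M (fun _ ↦ M.Q - M.f ψ) A := by rw [cEx_const M hpos]
    _ ≤ price M ψ (σ ψ) * cEx M (fun φ ↦ ∑ e with ψ e = none, selInd M π e φ * Fm M ψ e φ) A := by
        gcongr
        exact cEx_mono M fun φ hφ ↦ hπ.Q_sub_f_le_sum_selInd_mul_Fm hφ.1.subext_toSub
    _ = ∑ e with ψ e = none,
          price M ψ (σ ψ) * cEx M (fun φ ↦ selInd M π e φ * Fm M ψ e φ) A := by
        rw [cEx_sum, Finset.mul_sum]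
    _ ≤ ∑ e with ψ e = none, α * cEx M (mu M σ π e) A :=
        Finset.sum_le_sum fun e he ↦
          hσ.price_mul_cEx_Fm_le π b hψ (Finset.mem_filter.mp he).2
    _ ≤ ∑ e, α * cEx M (mu M σ π e) A :=
        Finset.sum_le_sum_of_subset_of_nonneg (Finset.filter_subset _ _) fun e _ _ ↦
          mul_nonneg hα (cEx_nonneg M (mu_nonneg hσ.isPolicy π e))
    _ = α * cEx M (muStar M σ π) A := by
        rw [← Finset.mul_sum, ← cEx_sum]
        rfl

end Revenue

theorem gap_nonneg {a ε : ℕ → ℝ} {q : ℝ} {t : ℕ}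
    (hmono : ∀ i j, 1 ≤ i → i ≤ j → j ≤ t → a i ≤ a j) (hlast : 1 ≤ t → a t ≤ q)
    (hε : ∀ i, 1 ≤ i → i < t → ε i = a (i + 1) - a i) (hεt : 1 ≤ t → ε t = q - a t)
    {i : ℕ} (hi : 1 ≤ i) (hit : i ≤ t) : 0 ≤ ε i := by
  obtain rfl | hlt := hit.eq_or_lt
  · rw [hεt hi]
    exact sub_nonneg.mpr (hlast hi)
  · rw [hε i hi hlt]
    exact sub_nonneg.mpr (hmono i (i + 1) hi i.le_succ hlt)

theorem conditional_lam_bound_general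
    (M : Problem E O) (α : ℝ) (σ : Sub E O → E) (hσ : IsGreedy M α σ)
    (π : Sub E O → E) (hπ : IsPolicy M π) {b r : ℝ} (hb : b < M.Q) (hr : 0 ≤ r)
    (ψ : Sub E O) (hpos : 0 < Pr M (leadsTo M σ b ψ)) :
    cEx M (lam M σ b r) (leadsTo M σ b ψ)
      ≤ α * cEx M (muStar M σ π) (leadsTo M σ b ψ) / (M.Q - b) * r := by
  obtain ⟨φ, hφ⟩ := exists_of_Pr_pos M hpos
  have hψb : M.f ψ ≤ b := hφ.2.1
  have hψ : M.f ψ < M.Q := hψb.trans_lt hb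
  rw [cEx_lam hpos]
  refine mul_le_mul_of_nonneg_right ((le_div_iff₀ (sub_pos.mpr hb)).mpr ?_) hr
  calc price M ψ (σ ψ) * (M.Q - b) ≤ price M ψ (σ ψ) * (M.Q - M.f ψ) :=
        mul_le_mul_of_nonneg_left (by linarith) (price_nonneg M (hσ.isPolicy ψ hψ))
    _ ≤ α * cEx M (muStar M σ π) (leadsTo M σ b ψ) := hσ.price_mul_Q_sub_f_le hπ hψ hpos

/-- For every marker index `i` and every `ψ ∈ N(σ)` with
`Pr[ψ ↝ i] > 0`: `E[λ_i | ψ ↝ i] ≤ (α·E[μ* | ψ ↝ i] / (Q − f(ρ_i)))·ε_i`. -/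
theorem conditional_lam_bound
    (M : Problem E O) (α : ℝ) (hα : 1 ≤ α)
    (σ : Sub E O → E) (hσ : IsGreedy M α σ)
    (πs : Sub E O → E) (hπs : IsOptimal M πs)
    (t : ℕ) (ρ : ℕ → Sub E O)
    (hcard : t = (Nnodes M σ).card)
    (hρmem : ∀ i, 1 ≤ i → i ≤ t → ρ i ∈ Nnodes M σ)
    (hρinj : ∀ i j, 1 ≤ i → i ≤ t → 1 ≤ j → j ≤ t → ρ i = ρ j → i = j)
    (hρmono : ∀ i j, 1 ≤ i → i ≤ j → j ≤ t → M.f (ρ i) ≤ M.f (ρ j))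
    (ε : ℕ → ℝ)
    (hε : ∀ i, 1 ≤ i → i < t → ε i = M.f (ρ (i + 1)) - M.f (ρ i))
    (hεt : 1 ≤ t → ε t = M.Q - M.f (ρ t))
    (i : ℕ) (hi1 : 1 ≤ i) (hit : i ≤ t)
    (ψ : Sub E O) (hmem : ψ ∈ Nnodes M σ)
    (hpos : 0 < Pr M (leadsTo M σ (M.f (ρ i)) ψ)) :
    cEx M (lam M σ (M.f (ρ i)) (ε i)) (leadsTo M σ (M.f (ρ i)) ψ)
      ≤ α * cEx M (muStar M σ πs) (leadsTo M σ (M.f (ρ i)) ψ) / (M.Q - M.f (ρ i)) * ε i := by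
  have hlevel : ∀ j, 1 ≤ j → j ≤ t → M.f (ρ j) < M.Q := fun j hj hjt ↦
    (Finset.mem_filter.mp (hρmem j hj hjt)).2.1
  have hεi : 0 ≤ ε i :=
    gap_nonneg hρmono (fun ht ↦ (hlevel t ht le_rfl).le) hε hεt hi1 hit
  exact conditional_lam_bound_general M α σ hσ πs hπs.1 (hlevel i hi1 hit) hεi ψ hpos


end
end SSC
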